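/- There exists a constant C > 0, independent of R, k, s, F and G, such that k²·‖g''‖² + k⁴·‖g'‖² + k⁶·‖g‖² ≤ C·R²·(‖F‖² + ‖G‖²). -/

import Mathlib

open MeasureTheory Complex

noncomputable section

/-- Square of the L² norm over [0,1]. -/
def l2sq (f : ℝ → ℂ) : ℝ := ∫ y in (0:ℝ)..(1:ℝ), ‖f y‖ ^ 2

/-- L² inner product over [0,1]. -/
def l2ip (f g : ℝ → ℂ) : ℂ := ∫ y in (0:ℝ)..(1:ℝ), (starRingEnd ℂ) (f y) * g y

/-!
Write the vorticity equation as `∂²h = (R s + k² + i R k U) h + R ∂F - i R k G`, where `U` is the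
shear profile `y`. Pairing with `h` and taking real parts removes the skew term `i R k U`, whatever
the real function `U` is, and leaves `‖∂h‖² + k² ‖h‖² ≤ Re ⟨∂h, R F⟩ + Re ⟨k h, i R G⟩`; Young's
inequality absorbs half of the left-hand side and gives `k² ‖h‖² ≤ R² (‖F‖² + ‖G‖²)`. Expanding
`‖∂²g - k² g‖²` and integrating by parts gives `‖∂²g‖² + 2 k² ‖∂g‖² + k⁴ ‖g‖² = ‖h‖²`, which after
multiplication by `k²` controls every term of the claim, with constant `1`.
-/

open scoped InnerProductSpace

section EnergyMethod

variable {E : Type*} [NormedAddCommGroup E] [InnerProductSpace ℝ E] {a b : ℝ}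

lemma two_mul_real_inner_le_norm_sq_add_norm_sq (x y : E) :
    2 * ⟪x, y⟫_ℝ ≤ ‖x‖ ^ 2 + ‖y‖ ^ 2 := by
  linarith [norm_sub_sq_real x y, sq_nonneg ‖x - y‖]

lemma two_mul_integral_inner_le_integral_norm_sq_add {u v : ℝ → E} (hab : a ≤ b)
    (hu : Continuous u) (hv : Continuous v) :
    2 * ∫ y in a..b, ⟪u y, v y⟫_ℝ ≤ (∫ y in a..b, ‖u y‖ ^ 2) + ∫ y in a..b, ‖v y‖ ^ 2 := by
  rw [← intervalIntegral.integral_const_mul,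
    ← intervalIntegral.integral_add (Continuous.intervalIntegrable (by fun_prop) _ _)
      (Continuous.intervalIntegrable (by fun_prop) _ _)]
  exact intervalIntegral.integral_mono hab (Continuous.intervalIntegrable (by fun_prop) _ _)
    (Continuous.intervalIntegrable (by fun_prop) _ _)
    fun y => two_mul_real_inner_le_norm_sq_add_norm_sq (u y) (v y)

lemma integral_inner_deriv_eq_neg_integral_deriv_inner {u v : ℝ → E} (hu : ContDiff ℝ 1 u)
    (hv : ContDiff ℝ 1 v) (ha : u a = 0) (hb : u b = 0) :
    ∫ y in a..b, ⟪u y, deriv v y⟫_ℝ = -∫ y in a..b, ⟪deriv u y, v y⟫_ℝ := by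
  have : Continuous (deriv u) := hu.continuous_deriv_one
  have : Continuous (deriv v) := hv.continuous_deriv_one
  have hasDerivAt_inner (y : ℝ) : HasDerivAt (fun y => ⟪u y, v y⟫_ℝ)
      (⟪u y, deriv v y⟫_ℝ + ⟪deriv u y, v y⟫_ℝ) y :=
    (hu.differentiable_one y).hasDerivAt.inner ℝ (hv.differentiable_one y).hasDerivAt
  rw [eq_neg_iff_add_eq_zero,
    ← intervalIntegral.integral_add (Continuous.intervalIntegrable (by fun_prop) _ _)
      (Continuous.intervalIntegrable (by fun_prop) _ _),
    intervalIntegral.integral_eq_sub_of_hasDerivAt (fun y _ => hasDerivAt_inner y)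
      (Continuous.intervalIntegrable (by fun_prop) _ _)]
  simp [ha, hb]

lemma integral_inner_iteratedDeriv_two_self {u : ℝ → E} (hu : ContDiff ℝ 2 u)
    (ha : u a = 0) (hb : u b = 0) :
    ∫ y in a..b, ⟪u y, iteratedDeriv 2 u y⟫_ℝ = -∫ y in a..b, ‖deriv u y‖ ^ 2 := by
  simpa only [iteratedDeriv_succ, iteratedDeriv_zero, real_inner_self_eq_norm_sq] using
    integral_inner_deriv_eq_neg_integral_deriv_inner (hu.of_le one_le_two) hu.deriv' ha hb

lemma integral_norm_sq_iteratedDeriv_two_sub_smul {u : ℝ → E} (hu : ContDiff ℝ 2 u)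
    (ha : u a = 0) (hb : u b = 0) (c : ℝ) :
    ∫ y in a..b, ‖iteratedDeriv 2 u y - c • u y‖ ^ 2 =
      (∫ y in a..b, ‖iteratedDeriv 2 u y‖ ^ 2) + 2 * c * (∫ y in a..b, ‖deriv u y‖ ^ 2) +
        c ^ 2 * ∫ y in a..b, ‖u y‖ ^ 2 := by
  have : Continuous (iteratedDeriv 2 u) := hu.continuous_iteratedDeriv 2 le_rfl
  have expand (y : ℝ) : ‖iteratedDeriv 2 u y - c • u y‖ ^ 2 =
      ‖iteratedDeriv 2 u y‖ ^ 2 - 2 * c * ⟪u y, iteratedDeriv 2 u y⟫_ℝ + c ^ 2 * ‖u y‖ ^ 2 := by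
    rw [norm_sub_sq_real, inner_smul_right, real_inner_comm, norm_smul, mul_pow,
      Real.norm_eq_abs, sq_abs]
    ring
  simp only [expand]
  rw [intervalIntegral.integral_add (Continuous.intervalIntegrable (by fun_prop) _ _)
      (Continuous.intervalIntegrable (by fun_prop) _ _),
    intervalIntegral.integral_sub (Continuous.intervalIntegrable (by fun_prop) _ _)
      (Continuous.intervalIntegrable (by fun_prop) _ _),
    intervalIntegral.integral_const_mul, intervalIntegral.integral_const_mul,
    integral_inner_iteratedDeriv_two_self hu ha hb]
  ring

variable {A : ℝ → E → E} {κ : ℝ} {u P Q : ℝ → E}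

lemma integral_norm_sq_deriv_add_le_integral_inner (hab : a ≤ b)
    (hA : ∀ y ∈ Set.Icc a b, ∀ x, κ ^ 2 * ‖x‖ ^ 2 ≤ ⟪x, A y x⟫_ℝ)
    (hu : ContDiff ℝ 2 u) (hP : ContDiff ℝ 1 P) (hQ : Continuous Q) (ha : u a = 0) (hb : u b = 0)
    (hode : ∀ y ∈ Set.Icc a b, iteratedDeriv 2 u y = A y (u y) + deriv P y - κ • Q y) :
    (∫ y in a..b, ‖deriv u y‖ ^ 2) + κ ^ 2 * (∫ y in a..b, ‖u y‖ ^ 2) ≤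
      (∫ y in a..b, ⟪deriv u y, P y⟫_ℝ) + ∫ y in a..b, ⟪κ • u y, Q y⟫_ℝ := by
  have : Continuous (iteratedDeriv 2 u) := hu.continuous_iteratedDeriv 2 le_rfl
  have : Continuous (deriv P) := hP.continuous_deriv_one
  have coercive : ∀ y ∈ Set.Icc a b, κ ^ 2 * ‖u y‖ ^ 2 ≤
      ⟪u y, iteratedDeriv 2 u y⟫_ℝ - ⟪u y, deriv P y⟫_ℝ + ⟪κ • u y, Q y⟫_ℝ := by
    intro y hy
    rw [hode y hy, inner_sub_right, inner_add_right, inner_smul_right, real_inner_smul_left]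
    linarith [hA y hy (u y)]
  have integrated := intervalIntegral.integral_mono_on (μ := volume) hab
    (Continuous.intervalIntegrable (by fun_prop) _ _)
    (Continuous.intervalIntegrable (by fun_prop) _ _) coercive
  rw [intervalIntegral.integral_const_mul,
    intervalIntegral.integral_add (Continuous.intervalIntegrable (by fun_prop) _ _)
      (Continuous.intervalIntegrable (by fun_prop) _ _),
    intervalIntegral.integral_sub (Continuous.intervalIntegrable (by fun_prop) _ _)
      (Continuous.intervalIntegrable (by fun_prop) _ _),
    integral_inner_iteratedDeriv_two_self hu ha hb,
    integral_inner_deriv_eq_neg_integral_deriv_inner (hu.of_le one_le_two) hP ha hb] at integrated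
  linarith

lemma integral_norm_sq_deriv_add_le_integral_norm_sq (hab : a ≤ b)
    (hA : ∀ y ∈ Set.Icc a b, ∀ x, κ ^ 2 * ‖x‖ ^ 2 ≤ ⟪x, A y x⟫_ℝ)
    (hu : ContDiff ℝ 2 u) (hP : ContDiff ℝ 1 P) (hQ : Continuous Q) (ha : u a = 0) (hb : u b = 0)
    (hode : ∀ y ∈ Set.Icc a b, iteratedDeriv 2 u y = A y (u y) + deriv P y - κ • Q y) :
    (∫ y in a..b, ‖deriv u y‖ ^ 2) + κ ^ 2 * (∫ y in a..b, ‖u y‖ ^ 2) ≤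
      (∫ y in a..b, ‖P y‖ ^ 2) + ∫ y in a..b, ‖Q y‖ ^ 2 := by
  have energy := integral_norm_sq_deriv_add_le_integral_inner hab hA hu hP hQ ha hb hode
  have young_P := two_mul_integral_inner_le_integral_norm_sq_add hab
    (hu.continuous_deriv one_le_two) hP.continuous
  have young_Q := two_mul_integral_inner_le_integral_norm_sq_add (u := fun y => κ • u y) hab
    (hu.continuous.const_smul κ) hQ
  have norm_smul_sq (y : ℝ) : ‖κ • u y‖ ^ 2 = κ ^ 2 * ‖u y‖ ^ 2 := by
    rw [norm_smul, mul_pow, Real.norm_eq_abs, sq_abs]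
  simp only [norm_smul_sq, intervalIntegral.integral_const_mul] at young_Q
  linarith

end EnergyMethod

lemma real_inner_mul_self (c z : ℂ) : ⟪z, c * z⟫_ℝ = c.re * ‖z‖ ^ 2 := by
  rw [Complex.inner, mul_assoc, Complex.mul_conj, Complex.re_mul_ofReal, Complex.normSq_eq_norm_sq]

lemma l2sq_nonneg (f : ℝ → ℂ) : 0 ≤ l2sq f :=
  intervalIntegral.integral_nonneg zero_le_one fun _ _ => sq_nonneg _

lemma l2sq_const_mul (c : ℂ) (f : ℝ → ℂ) : l2sq (fun y => c * f y) = ‖c‖ ^ 2 * l2sq f := by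
  simp only [l2sq, norm_mul, mul_pow, intervalIntegral.integral_const_mul]

lemma l2sq_eq_of_helmholtz {g h : ℝ → ℂ} {c : ℝ}
    (hg : ContDiff ℝ 2 g) (hg₀ : g 0 = 0) (hg₁ : g 1 = 0)
    (hgh : ∀ y ∈ Set.Icc (0 : ℝ) 1, iteratedDeriv 2 g y - c * g y = h y) :
    l2sq h = l2sq (iteratedDeriv 2 g) + 2 * c * l2sq (deriv g) + c ^ 2 * l2sq g := by
  simp only [l2sq]
  rw [← integral_norm_sq_iteratedDeriv_two_sub_smul hg hg₀ hg₁ c]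
  refine intervalIntegral.integral_congr fun y hy => ?_
  rw [Set.uIcc_of_le zero_le_one] at hy
  simp only [← hgh y hy, Complex.real_smul]

section ShearFlow

variable {R k : ℝ} {s : ℂ} {U : ℝ → ℝ} {F G h g : ℝ → ℂ}

lemma sq_mul_l2sq_vorticity_le (hR : 0 < R) (hs : 0 ≤ s.re)
    (hF : ContDiff ℝ 1 F) (hG : Continuous G)
    (hh : ContDiff ℝ 2 h) (hh₀ : h 0 = 0) (hh₁ : h 1 = 0)
    (hode : ∀ y ∈ Set.Icc (0 : ℝ) 1,
      (1 / (R : ℂ)) * iteratedDeriv 2 h y - (s + (k : ℂ) ^ 2 / R + I * k * U y) * h y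
        = deriv F y - I * k * G y) :
    k ^ 2 * l2sq h ≤ R ^ 2 * (l2sq F + l2sq G) := by
  have hR₀ : (R : ℂ) ≠ 0 := mod_cast hR.ne'
  have coercive (y : ℝ) (z : ℂ) :
      k ^ 2 * ‖z‖ ^ 2 ≤ ⟪z, (R * s + (k : ℂ) ^ 2 + I * R * k * U y) * z⟫_ℝ := by
    have re_potential : (R * s + (k : ℂ) ^ 2 + I * R * k * U y).re = R * s.re + k ^ 2 := by
      simp [pow_two]
    rw [real_inner_mul_self, re_potential]
    gcongr
    linarith [mul_nonneg hR.le hs]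
  have scaled_ode : ∀ y ∈ Set.Icc (0 : ℝ) 1, iteratedDeriv 2 h y =
      (R * s + (k : ℂ) ^ 2 + I * R * k * U y) * h y + deriv (fun y => R * F y) y
        - k • (I * R * G y) := by
    intro y hy
    have := hode y hy
    rw [deriv_const_mul _ (hF.differentiable_one y), Complex.real_smul]
    field_simp at this
    linear_combination this
  have energy : l2sq (deriv h) + k ^ 2 * l2sq h ≤
      l2sq (fun y => R * F y) + l2sq (fun y => I * R * G y) :=
    integral_norm_sq_deriv_add_le_integral_norm_sq zero_le_one (fun y _ => coercive y) hh
      (contDiff_const.mul hF) (continuous_const.mul hG) hh₀ hh₁ scaled_ode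
  simp only [l2sq_const_mul, norm_mul, norm_I, one_mul, norm_real, Real.norm_eq_abs,
    sq_abs] at energy
  linarith [l2sq_nonneg (deriv h)]

theorem combined_estimate_general (hR : 0 < R) (hs : 0 ≤ s.re)
    (hF : ContDiff ℝ 1 F) (hG : Continuous G)
    (hh : ContDiff ℝ 2 h) (hh₀ : h 0 = 0) (hh₁ : h 1 = 0)
    (hode : ∀ y ∈ Set.Icc (0 : ℝ) 1,
      (1 / (R : ℂ)) * iteratedDeriv 2 h y - (s + (k : ℂ) ^ 2 / R + I * k * U y) * h y
        = deriv F y - I * k * G y)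
    (hg : ContDiff ℝ 2 g) (hg₀ : g 0 = 0) (hg₁ : g 1 = 0)
    (hgh : ∀ y ∈ Set.Icc (0 : ℝ) 1, iteratedDeriv 2 g y - (k : ℂ) ^ 2 * g y = h y) :
    k ^ 2 * l2sq (iteratedDeriv 2 g) + k ^ 4 * l2sq (deriv g) + k ^ 6 * l2sq g
      ≤ R ^ 2 * (l2sq F + l2sq G) := by
  have helmholtz := l2sq_eq_of_helmholtz (c := k ^ 2) hg hg₀ hg₁ (by exact_mod_cast hgh)
  calc k ^ 2 * l2sq (iteratedDeriv 2 g) + k ^ 4 * l2sq (deriv g) + k ^ 6 * l2sq g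
      ≤ k ^ 2 * l2sq (iteratedDeriv 2 g) + 2 * k ^ 4 * l2sq (deriv g) + k ^ 6 * l2sq g := by
        linarith [mul_nonneg (by positivity : 0 ≤ k ^ 4) (l2sq_nonneg (deriv g))]
    _ = k ^ 2 * l2sq h := by rw [helmholtz]; ring
    _ ≤ R ^ 2 * (l2sq F + l2sq G) := sq_mul_l2sq_vorticity_le hR hs hF hG hh hh₀ hh₁ hode

end ShearFlow

/-- combined estimate for g. -/
theorem combined_estimate :
    ∃ C > (0:ℝ), ∀ (R : ℝ), 0 < R → ∀ (k : ℤ), 1 ≤ |k| → ∀ (s : ℂ), 0 ≤ s.re →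
    ∀ (F G h g : ℝ → ℂ), ContDiff ℝ 1 F → Continuous G →
    ContDiff ℝ 2 h → h 0 = 0 → h 1 = 0 →
    (∀ y ∈ Set.Icc (0:ℝ) 1,
      (1/(R:ℂ)) * iteratedDeriv 2 h y
        - (s + (k:ℂ)^2 / (R:ℂ) + Complex.I * (k:ℂ) * (y:ℂ)) * h y
        = deriv F y - Complex.I * (k:ℂ) * G y) →
    ContDiff ℝ 2 g → g 0 = 0 → g 1 = 0 →
    (∀ y ∈ Set.Icc (0:ℝ) 1, iteratedDeriv 2 g y - (k:ℂ)^2 * g y = h y) →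
    (k:ℝ)^2 * l2sq (iteratedDeriv 2 g) + (k:ℝ)^4 * l2sq (deriv g)
      + (k:ℝ)^6 * l2sq g ≤ C * R^2 * (l2sq F + l2sq G) := by
  refine ⟨1, one_pos, fun R hR k _ s hs F G h g hF hG hh hh₀ hh₁ hode hg hg₀ hg₁ hgh => ?_⟩
  simpa only [one_mul, ofReal_intCast] using combined_estimate_general (k := k) (U := fun y => y)
    hR hs hF hG hh hh₀ hh₁ (by simpa only [ofReal_intCast] using hode) hg hg₀ hg₁
    (by simpa only [ofReal_intCast] using hgh)

end
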